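/- Fix c* > 0 and K = d_sr^α · (β² M N_r Δ₁ + d_k^α λ_q²) > 0, and define for each transmit SNR ρ > 0 the perfect-SIC outage probability P(ρ) = F(√(c* K / ρ)). Then lim_{ρ→∞} ρ^{(μ₀+1)/2} · P(ρ) = (c* K)^{(μ₀+1)/2} / (Γ(μ₀+2) · φ₀^{μ₀+1}). In particular P(ρ) decays like ρ^{−(μ₀+1)/2} at high SNR. -/

import Mathlib

open MeasureTheory ProbabilityTheory Topology Filter

/-- Lower incomplete gamma function `γ(s, x) = ∫₀ˣ t^{s-1} e^{-t} dt`. -/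
noncomputable def lowerGamma (s x : ℝ) : ℝ := ∫ t in (0:ℝ)..x, t ^ (s - 1) * Real.exp (-t)

/-- `μ₀ = ((M+1)π² − 16)/(16 − π²)`. -/
noncomputable def mu0 (M : ℕ) : ℝ := (((M : ℝ) + 1) * Real.pi ^ 2 - 16) / (16 - Real.pi ^ 2)

/-- `φ₀ = (16 − π²)/(4π)`. -/
noncomputable def phi0 : ℝ := (16 - Real.pi ^ 2) / (4 * Real.pi)

/-- The CDF of the Gamma distribution with shape `μ₀+1` and scale `φ₀`:
`F(x) = γ(μ₀+1, x/φ₀)/Γ(μ₀+1)`. -/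
noncomputable def F (M : ℕ) (x : ℝ) : ℝ :=
  lowerGamma (mu0 M + 1) (x / phi0) / Real.Gamma (mu0 M + 1)

/-!
Near `0` the factor `e^{-t}` in the lower incomplete gamma function is close to `1`, so
`γ(s, x) ~ x ^ s / s`. At `x = √(A / ρ) / φ` the powers of `ρ` in `ρ ^ (s / 2) * (x ^ s / s)`
cancel exactly, and `s * Γ(s) = Γ(s + 1)` collects the remaining constants.
-/

open Asymptotics

section LowerGamma

variable {s x : ℝ}

theorem integral_rpow_sub_one (hs : 0 < s) : ∫ t in (0 : ℝ)..x, t ^ (s - 1) = x ^ s / s := by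
  rw [integral_rpow (Or.inl (by linarith)), sub_add_cancel, Real.zero_rpow hs.ne', sub_zero]

theorem intervalIntegrable_rpow_sub_one (hs : 0 < s) :
    IntervalIntegrable (fun t : ℝ => t ^ (s - 1)) volume 0 x :=
  intervalIntegral.intervalIntegrable_rpow' (by linarith)

theorem intervalIntegrable_rpow_sub_one_mul_exp_neg (hs : 0 < s) :
    IntervalIntegrable (fun t : ℝ => t ^ (s - 1) * Real.exp (-t)) volume 0 x :=
  (intervalIntegrable_rpow_sub_one hs).mul_continuousOn (by fun_prop)

theorem lowerGamma_le_rpow_div (hs : 0 < s) (hx : 0 ≤ x) : lowerGamma s x ≤ x ^ s / s := by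
  rw [← integral_rpow_sub_one hs]
  refine intervalIntegral.integral_mono_on hx (intervalIntegrable_rpow_sub_one_mul_exp_neg hs)
    (intervalIntegrable_rpow_sub_one hs) fun t ht => ?_
  exact mul_le_of_le_one_right (Real.rpow_nonneg ht.1 _)
    (Real.exp_le_one_iff.2 (by linarith [ht.1]))

theorem exp_neg_mul_rpow_div_le_lowerGamma (hs : 0 < s) (hx : 0 ≤ x) :
    Real.exp (-x) * (x ^ s / s) ≤ lowerGamma s x := by
  rw [← integral_rpow_sub_one hs, mul_comm, ← intervalIntegral.integral_mul_const]
  refine intervalIntegral.integral_mono_on hx ((intervalIntegrable_rpow_sub_one hs).mul_const _)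
    (intervalIntegrable_rpow_sub_one_mul_exp_neg hs) fun t ht => ?_
  exact mul_le_mul_of_nonneg_left (Real.exp_le_exp.2 (neg_le_neg ht.2)) (Real.rpow_nonneg ht.1 _)

theorem lowerGamma_isEquivalent_rpow_div (hs : 0 < s) :
    lowerGamma s ~[𝓝[≥] 0] fun x => x ^ s / s := by
  have hexp : (fun x : ℝ => 1 - Real.exp (-x)) =o[𝓝[≥] 0] fun _ => (1 : ℝ) := by
    have hcont : Continuous fun x : ℝ => 1 - Real.exp (-x) := by fun_prop
    exact (isLittleO_one_iff ℝ).2 ((hcont.tendsto' 0 0 (by simp)).mono_left nhdsWithin_le_nhds)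
  have hbound : (lowerGamma s - fun x => x ^ s / s) =O[𝓝[≥] 0]
      fun x => (1 - Real.exp (-x)) * (x ^ s / s) := by
    refine IsBigO.of_norm_eventuallyLE ?_
    filter_upwards [self_mem_nhdsWithin] with x hx
    rw [Pi.sub_apply, Real.norm_of_nonpos (sub_nonpos.2 (lowerGamma_le_rpow_div hs hx))]
    linarith [exp_neg_mul_rpow_div_le_lowerGamma hs hx]
  simpa only [one_mul, IsEquivalent] using
    hbound.trans_isLittleO (hexp.mul_isBigO (isBigO_refl _ _))

end LowerGamma

theorem tendsto_sqrt_div_div_atTop_nhdsGE (A : ℝ) {φ : ℝ} (hφ : 0 ≤ φ) :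
    Tendsto (fun ρ => √(A / ρ) / φ) atTop (𝓝[≥] 0) := by
  refine tendsto_nhdsWithin_iff.2 ⟨?_, .of_forall fun ρ => div_nonneg (Real.sqrt_nonneg _) hφ⟩
  simpa using ((tendsto_const_nhds (x := A)).div_atTop tendsto_id).sqrt.div_const φ

theorem rpow_half_mul_sqrt_div_rpow {A ρ : ℝ} (hA : 0 ≤ A) (hρ : 0 < ρ) (s : ℝ) :
    ρ ^ (s / 2) * √(A / ρ) ^ s = A ^ (s / 2) := by
  rw [← Real.rpow_div_two_eq_sqrt s (by positivity), ← Real.mul_rpow hρ.le (by positivity),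
    mul_div_cancel₀ _ hρ.ne']

theorem asymptotic_outage_ARIS_NOMA_pSIC_general {s φ A : ℝ} (hs : 0 < s) (hφ : 0 < φ)
    (hA : 0 ≤ A) :
    Tendsto (fun ρ : ℝ => ρ ^ (s / 2) * (lowerGamma s (√(A / ρ) / φ) / Real.Gamma s)) atTop
      (𝓝 (A ^ (s / 2) / (Real.Gamma (s + 1) * φ ^ s))) := by
  have hequiv : (fun ρ : ℝ => ρ ^ (s / 2) * ((√(A / ρ) / φ) ^ s / s / Real.Gamma s)) ~[atTop]
      fun ρ => ρ ^ (s / 2) * (lowerGamma s (√(A / ρ) / φ) / Real.Gamma s) :=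
    IsEquivalent.refl.mul <| .div (((lowerGamma_isEquivalent_rpow_div hs).comp_tendsto
      (tendsto_sqrt_div_div_atTop_nhdsGE A hφ.le)).symm) .refl
  refine hequiv.tendsto_nhds (tendsto_const_nhds.congr' ?_)
  filter_upwards [eventually_gt_atTop 0] with ρ hρ
  rw [Real.Gamma_add_one hs.ne', Real.div_rpow (Real.sqrt_nonneg _) hφ.le,
    ← rpow_half_mul_sqrt_div_rpow hA hρ s]
  ring

theorem sixteen_sub_pi_sq_pos : 0 < 16 - Real.pi ^ 2 := by
  nlinarith [Real.pi_lt_four, Real.pi_pos]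

theorem phi0_pos : 0 < phi0 :=
  div_pos sixteen_sub_pi_sq_pos (by positivity)

theorem mu0_add_one (M : ℕ) : mu0 M + 1 = M * Real.pi ^ 2 / (16 - Real.pi ^ 2) := by
  rw [mu0, div_add_one sixteen_sub_pi_sq_pos.ne']
  ring

theorem mu0_add_one_pos {M : ℕ} (hM : 0 < M) : 0 < mu0 M + 1 := by
  rw [mu0_add_one]
  exact div_pos (by positivity) sixteen_sub_pi_sq_pos

/-- **Asymptotic OP (ARIS-NOMA, perfect SIC)**: with
`K = d_sr^α (β² M N_r Δ₁ + d_k^α λ_q²)` and `P(ρ) = F(√(c* K/ρ))`,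
`lim_{ρ→∞} ρ^{(μ₀+1)/2} P(ρ) = (c* K)^{(μ₀+1)/2} / (Γ(μ₀+2) φ₀^{μ₀+1})`. -/
theorem asymptotic_outage_ARIS_NOMA_pSIC
    (M : ℕ) (hM : 0 < M)
    (c lamq beta Nr Δ1 alpha dsr dk : ℝ)
    (hc : 0 < c) (hlam0 : 0 < lamq) (hlam1 : lamq ≤ 1) (hbeta : 0 < beta)
    (hNr : 0 < Nr) (hΔ1 : 0 < Δ1) (halpha : 0 < alpha) (hdsr : 0 < dsr) (hdk : 0 < dk)
    (K : ℝ)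
    (hK : K = dsr ^ alpha * (beta ^ 2 * (M : ℝ) * Nr * Δ1 + dk ^ alpha * lamq ^ 2)) :
    Filter.Tendsto
      (fun rho : ℝ => rho ^ ((mu0 M + 1) / 2) * F M (Real.sqrt (c * K / rho)))
      Filter.atTop
      (𝓝 ((c * K) ^ ((mu0 M + 1) / 2) /
        (Real.Gamma (mu0 M + 2) * phi0 ^ (mu0 M + 1)))) := by
  have hcK : 0 ≤ c * K := by rw [hK]; positivity
  simpa only [F, add_assoc, one_add_one_eq_two] using
    asymptotic_outage_ARIS_NOMA_pSIC_general (mu0_add_one_pos hM) phi0_pos hcK
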